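/- Let n ≥ 2, 0 < α < n, 1 < s ≤ ∞ and 0 < β ≤ 1, and suppose Ω satisfies the L^{s;β}-Dini condition D_{s;β}. Then there is a constant C > 0 such that for every ball B = B(x₀, r), every integer j ≥ 2, and all x, y ∈ B, (∫_{2^{j+1}B ∖ 2^{j}B} | Ω(x−z)/|x−z|^{n−α} − Ω(y−z)/|y−z|^{n−α} |^s dz)^{1/s} ≤ C (2^{j}r)^{n/s − (n−α)} [ 2^{−(j−1)} + 2^{−jβ} ∫_{|x−x₀|/(2^{j+1}r)}^{|x−x₀|/(2^{j}r)} ω_s(δ)/δ^{1+β} dδ + 2^{−jβ} ∫_{|y−x₀|/(2^{j+1}r)}^{|y−x₀|/(2^{j}r)} ω_s(δ)/δ^{1+β} dδ ] (for s = ∞ the left-hand side is the essential supremum over 2^{j+1}B ∖ 2^{j}B and n/s = 0). -/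

import Mathlib

noncomputable section

open MeasureTheory Metric Set
open scoped ENNReal

abbrev En (n : ℕ) : Type := EuclideanSpace ℝ (Fin n)

/-- `Ω` is homogeneous of degree zero. -/
def HomZero {n : ℕ} (Ω : En n → ℝ) : Prop :=
  ∀ t : ℝ, 0 < t → ∀ x : En n, x ≠ 0 → Ω (t • x) = Ω x

/-- Surface measure on the unit sphere `S^{n-1}`. -/
noncomputable def sphereMeasure (n : ℕ) : Measure (sphere (0 : En n) 1) :=
  (volume : Measure (En n)).toSphere

/-- The `L^s(S^{n-1})` norm of `Ω` (essential supremum when `s = ∞`). -/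
noncomputable def sphereLpNorm {n : ℕ} (s : ℝ≥0∞) (Ω : En n → ℝ) : ℝ≥0∞ :=
  eLpNorm (fun x : sphere (0 : En n) 1 => Ω (x : En n)) s (sphereMeasure n)

/-- `‖ρ - I‖ = sup_{x' ∈ S^{n-1}} |ρ x' - x'|`. -/
noncomputable def rotNorm {n : ℕ} (ρ : En n ≃ₗᵢ[ℝ] En n) : ℝ :=
  ⨆ x : sphere (0 : En n) 1, ‖ρ (x : En n) - (x : En n)‖

/-- `ρ ∈ SO(n)`: a linear isometry with determinant one. -/
def IsRotation {n : ℕ} (ρ : En n ≃ₗᵢ[ℝ] En n) : Prop :=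
  LinearMap.det (ρ.toLinearEquiv : En n →ₗ[ℝ] En n) = 1

/-- The integral modulus of continuity `ω_s(δ)` of `Ω` of order `s`
(essential-sup version when `s = ∞`). -/
noncomputable def modCont {n : ℕ} (s : ℝ≥0∞) (Ω : En n → ℝ) (δ : ℝ) : ℝ :=
  (⨆ ρ : {ρ : En n ≃ₗᵢ[ℝ] En n // IsRotation ρ ∧ rotNorm ρ < δ},
    eLpNorm (fun x : sphere (0 : En n) 1 => Ω (ρ.1 (x : En n)) - Ω (x : En n)) s
      (sphereMeasure n)).toReal

/-- The `L^{s;β}`-Dini smoothness condition `D_{s;β}`. -/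
def DiniCond {n : ℕ} (s : ℝ≥0∞) (β : ℝ) (Ω : En n → ℝ) : Prop :=
  HomZero Ω ∧ sphereLpNorm s Ω ≠ ⊤ ∧
    IntegrableOn (fun δ : ℝ => modCont s Ω δ / δ ^ (1 + β)) (Ioo (0 : ℝ) 1)

/-- The homogeneous fractional integral operator `T_{Ω,α}`. -/
noncomputable def T {n : ℕ} (Ω : En n → ℝ) (α : ℝ) (f : En n → ℝ) (x : En n) : ℝ :=
  ∫ y, Ω (x - y) * ‖x - y‖ ^ (α - (n : ℝ)) * f y

/-- Conjugate exponent of `s ∈ (1,∞]`, with `∞' = 1`. -/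
noncomputable def conj (s : ℝ≥0∞) : ℝ := if s = ⊤ then 1 else s.toReal / (s.toReal - 1)

/-- Conjugate exponent of a real exponent `t`. -/
noncomputable def rconj (t : ℝ) : ℝ := t / (t - 1)

/-- A weight: a locally integrable a.e. positive function. -/
def IsWeight {n : ℕ} (ω : En n → ℝ) : Prop :=
  LocallyIntegrable ω volume ∧ ∀ᵐ x : En n, 0 < ω x

/-- The Muckenhoupt–Wheeden class `A(t, ∞)`. -/
def MemArInfty {n : ℕ} (ω : En n → ℝ) (t : ℝ) : Prop :=
  ∃ C > 0, ∀ (x₀ : En n) (r : ℝ), 0 < r →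
    essSup ω (volume.restrict (ball x₀ r)) *
      (⨍ x in ball x₀ r, ω x ^ (-(rconj t))) ^ (1 / rconj t) ≤ C

/-- The Muckenhoupt–Wheeden class `A(u, t)` (with the `ess sup` convention when `u = 1`). -/
def MemArt {n : ℕ} (ω : En n → ℝ) (u t : ℝ) : Prop :=
  ∃ C > 0, ∀ (x₀ : En n) (r : ℝ), 0 < r →
    (⨍ x in ball x₀ r, ω x ^ t) ^ (1 / t) *
      (if u = 1 then essSup (fun x => (ω x)⁻¹) (volume.restrict (ball x₀ r))
       else (⨍ x in ball x₀ r, ω x ^ (-(rconj u))) ^ (1 / rconj u)) ≤ C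

/-- The weighted Lebesgue norm `‖f‖_{L^p(ω^p)}`. -/
noncomputable def wLpNorm {n : ℕ} (p : ℝ) (ω f : En n → ℝ) : ℝ :=
  (∫ x, |f x| ^ p * ω x ^ p) ^ (1 / p)

/-- `f ∈ L^p(ω^p)`. -/
def MemWLp {n : ℕ} (p : ℝ) (ω f : En n → ℝ) : Prop :=
  Measurable f ∧ Integrable (fun x => |f x| ^ p * ω x ^ p)

/-- The set of ball quantities defining the weighted Morrey norm `M^{p,κ}(ω₁, ν)`. -/
def morreySet {n : ℕ} (p κ : ℝ) (ω₁ ν f : En n → ℝ) : Set ℝ :=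
  {c | ∃ (x₀ : En n) (r : ℝ), 0 < r ∧
    c = ((∫ x in ball x₀ r, ν x) ^ (-κ) * ∫ x in ball x₀ r, |f x| ^ p * ω₁ x) ^ (1 / p)}

/-- The weighted Morrey norm `‖f‖_{M^{p,κ}(ω₁, ν)}`. -/
noncomputable def morreyNorm {n : ℕ} (p κ : ℝ) (ω₁ ν f : En n → ℝ) : ℝ :=
  sSup (morreySet p κ ω₁ ν f)

/-- `f ∈ M^{p,κ}(ω₁, ν)`, i.e. `‖f‖_{M^{p,κ}(ω₁,ν)} < ∞`. -/
def MemMorrey {n : ℕ} (p κ : ℝ) (ω₁ ν f : En n → ℝ) : Prop :=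
  Measurable f ∧
  (∀ (x₀ : En n) (r : ℝ), 0 < r → IntegrableOn (fun x => |f x| ^ p * ω₁ x) (ball x₀ r)) ∧
  BddAbove (morreySet p κ ω₁ ν f)

instance (n : ℕ) : IsFiniteMeasure (sphereMeasure n) :=
  inferInstanceAs (IsFiniteMeasure (volume : Measure (En n)).toSphere)

/-- Polar coordinates: for functions homogeneous of degree zero, the `L^s` norm on a ball is a
constant multiple of the `L^s` norm on the unit sphere. -/
lemma exists_eLpNorm_ball_eq {n : ℕ} (hn : 2 ≤ n) {R : ℝ} (hR : 0 < R) :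
    ∃ c : ℝ≥0∞, c ≠ 0 ∧ c ≠ ⊤ ∧ ∀ (s : ℝ≥0∞) (g : En n → ℝ), Measurable g → HomZero g →
      eLpNorm g s (volume.restrict (ball 0 R)) =
        c ^ (1 / s).toReal * eLpNorm (fun x : sphere (0 : En n) 1 => g x) s (sphereMeasure n) := by
  have : Nonempty (Fin n) := ⟨⟨0, by lia⟩⟩
  let c : ℝ≥0∞ := Measure.volumeIoiPow (n - 1) (Iio ⟨R, hR⟩)
  have hc : c = ENNReal.ofReal (R ^ (n - 1 + 1) / ((n - 1 : ℕ) + 1)) :=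
    Measure.volumeIoiPow_apply_Iio (n - 1) ⟨R, hR⟩
  have hc0 : c ≠ 0 := by
    rw [hc, Ne, ENNReal.ofReal_eq_zero, not_le]; positivity
  refine ⟨c, hc0, by rw [hc]; exact ENNReal.ofReal_ne_top, fun s g hg hh => ?_⟩
  let H := homeomorphUnitSphereProd (En n)
  let μ₀ : Measure ({0}ᶜ : Set (En n)) := (volume : Measure (En n)).comap (↑)
  have hmp : MeasurePreserving H μ₀
      ((sphereMeasure n).prod (Measure.volumeIoiPow (n - 1))) := by
    have := (volume : Measure (En n)).measurePreserving_homeomorphUnitSphereProd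
    rwa [finrank_euclideanSpace_fin] at this
  have hemb : MeasurableEmbedding ((↑) : ({0}ᶜ : Set (En n)) → En n) :=
    MeasurableEmbedding.subtype_coe (measurableSet_singleton _).compl
  have h1 : (volume : Measure (En n)).restrict (ball 0 R) =
      Measure.map (↑) (μ₀.restrict ((↑) ⁻¹' ball (0 : En n) R)) := by
    rw [← hemb.restrict_map, hemb.map_comap, Subtype.range_coe]
    rw [restrict_compl_singleton]
  have hpre : ((↑) ⁻¹' ball (0 : En n) R : Set ({0}ᶜ : Set (En n))) =
      H ⁻¹' (univ ×ˢ Iio ⟨R, hR⟩) := by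
    ext x
    simp [H, ← Subtype.coe_lt_coe]
  have h2 : MeasurePreserving H (μ₀.restrict ((↑) ⁻¹' ball (0 : En n) R))
      ((sphereMeasure n).prod ((Measure.volumeIoiPow (n - 1)).restrict (Iio ⟨R, hR⟩))) := by
    have := hmp.restrict_preimage (s := univ ×ˢ Iio (⟨R, hR⟩ : Ioi (0 : ℝ)))
      (MeasurableSet.univ.prod measurableSet_Iio)
    rwa [← hpre, ← Measure.prod_restrict, Measure.restrict_univ] at this
  have h3 : Measure.map (fun x => (H x).1) (μ₀.restrict ((↑) ⁻¹' ball (0 : En n) R)) =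
      c • sphereMeasure n := by
    rw [show (fun x => (H x).1) = Prod.fst ∘ H from rfl,
      ← Measure.map_map measurable_fst H.measurable, h2.map_eq, Measure.map_fst_prod,
      Measure.restrict_apply_univ]
  have hgm : Measurable (fun x : sphere (0 : En n) 1 => g x) := hg.comp measurable_subtype_coe
  rw [h1, eLpNorm_map_measure hg.aestronglyMeasurable hemb.measurable.aemeasurable]
  have h4 : g ∘ ((↑) : ({0}ᶜ : Set (En n)) → En n) =
      (fun x : sphere (0 : En n) 1 => g x) ∘ fun x => (H x).1 := by
    ext x
    have hx : (x : En n) ≠ 0 := x.2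
    simp only [Function.comp_apply, H, homeomorphUnitSphereProd_apply_fst_coe]
    exact (hh _ (inv_pos.2 (norm_pos_iff.2 hx)) _ hx).symm
  rw [h4, ← eLpNorm_map_measure hgm.aestronglyMeasurable (by fun_prop), h3,
    eLpNorm_smul_measure_of_ne_zero hc0, smul_eq_mul]

lemma setLIntegral_le_of_lipschitzOnWith {n : ℕ} {K : NNReal} {Φ : En n → En n} {U V : Set (En n)}
    (hΦm : Measurable Φ) (hΦ : LipschitzOnWith K Φ V) (hUV : U ⊆ Φ '' V)
    {G : En n → ℝ≥0∞} (hG : Measurable G) :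
    ∫⁻ p in U, G p ≤ (K : ℝ≥0∞) ^ n * ∫⁻ b in V, G (Φ b) := by
  have key : ∀ A : Set (En n), A ⊆ V → volume (Φ '' A) ≤ (K : ℝ≥0∞) ^ n * volume A := by
    intro A hA
    have hH := Measure.isAddLeftInvariant_eq_smul (volume : Measure (En n))
      (Measure.hausdorffMeasure (Module.finrank ℝ (En n)))
    rw [hH]
    simp only [Measure.smul_apply, finrank_euclideanSpace_fin]
    have := (hΦ.mono hA).hausdorffMeasure_image_le (Nat.cast_nonneg (α := ℝ) n)
    rw [ENNReal.rpow_natCast] at this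
    rw [mul_smul_comm]
    gcongr
  have hle : (volume : Measure (En n)).restrict U ≤
      (K : ℝ≥0∞) ^ n • Measure.map Φ (volume.restrict V) := by
    refine Measure.le_iff.2 fun E hE => ?_
    rw [Measure.smul_apply, Measure.map_apply hΦm hE, Measure.restrict_apply hE,
      Measure.restrict_apply (hΦm hE), smul_eq_mul]
    refine (measure_mono ?_).trans (key (Φ ⁻¹' E ∩ V) inter_subset_right)
    rintro p ⟨hpE, hpU⟩
    obtain ⟨b, hb, rfl⟩ := hUV hpU
    exact ⟨b, ⟨hpE, hb⟩, rfl⟩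
  calc ∫⁻ p in U, G p ≤ ∫⁻ p, G p ∂((K : ℝ≥0∞) ^ n • Measure.map Φ (volume.restrict V)) :=
        lintegral_mono' hle le_rfl
    _ = _ := by rw [lintegral_smul_measure, lintegral_map hG hΦm, smul_eq_mul]

lemma isRotation_reflection_trans {n : ℕ} {a b : En n} (ha : a ≠ 0) (hb : b ≠ 0) :
    IsRotation ((ℝ ∙ b).reflection.trans (ℝ ∙ a).reflection) := by
  have hdet : ∀ c : En n, c ≠ 0 →
      LinearMap.det ((ℝ ∙ c).reflection.toLinearEquiv : En n →ₗ[ℝ] En n) = (-1) ^ (n - 1) := by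
    intro c hc
    have h1 := (ℝ ∙ c).det_reflection
    have h2 := (ℝ ∙ c).finrank_add_finrank_orthogonal
    rw [finrank_span_singleton hc, finrank_euclideanSpace_fin] at h2
    rwa [Nat.eq_sub_of_add_eq' h2] at h1
  unfold IsRotation
  have : (((ℝ ∙ b).reflection.trans (ℝ ∙ a).reflection).toLinearEquiv : En n →ₗ[ℝ] En n) =
      ((ℝ ∙ a).reflection.toLinearEquiv : En n →ₗ[ℝ] En n) ∘ₗ
        ((ℝ ∙ b).reflection.toLinearEquiv : En n →ₗ[ℝ] En n) := rfl
  rw [this, LinearMap.det_comp, hdet a ha, hdet b hb, ← mul_pow]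
  simp

/-- The reflection of `w` across the line spanned by `b`. -/
def lineReflection {n : ℕ} (b w : En n) : En n := (2 * (inner ℝ b w / ‖b‖ ^ 2)) • b - w

lemma reflection_eq_lineReflection {n : ℕ} (b w : En n) :
    (ℝ ∙ b).reflection w = lineReflection b w := by
  rw [Submodule.reflection_singleton_apply, lineReflection, two_smul, two_mul, add_smul]
  rfl

lemma measurable_lineReflection {α : Type*} [MeasurableSpace α] {n : ℕ} {f g : α → En n}
    (hf : Measurable f) (hg : Measurable g) :
    Measurable fun x => lineReflection (f x) (g x) := by
  unfold lineReflection
  fun_prop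

lemma norm_normalize_sub_le {n : ℕ} {a b : En n} (ha : a ≠ 0) (hb : b ≠ 0) :
    ‖(‖a‖⁻¹ • a) - ‖b‖⁻¹ • b‖ ≤ 2 * ‖a - b‖ / ‖a‖ := by
  have ha' := norm_pos_iff.2 ha
  have hb' := norm_pos_iff.2 hb
  have h : (‖a‖⁻¹ • a) - ‖b‖⁻¹ • b =
      ‖a‖⁻¹ • (a - b) + (‖a‖⁻¹ * (‖b‖ - ‖a‖)) • (‖b‖⁻¹ • b) := by
    have : ‖b‖⁻¹ • b = (‖a‖⁻¹ * ‖a‖ * ‖b‖⁻¹) • b := by rw [inv_mul_cancel₀ ha'.ne', one_mul]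
    have h2 : ‖a‖⁻¹ • b = (‖a‖⁻¹ * ‖b‖ * ‖b‖⁻¹) • b := by
      rw [mul_assoc, mul_inv_cancel₀ hb'.ne', mul_one]
    rw [smul_sub, h2, smul_smul, show (‖b‖⁻¹ • b) = (‖a‖⁻¹ * ‖a‖ * ‖b‖⁻¹) • b from this]
    module
  rw [h]
  refine (norm_add_le _ _).trans ?_
  rw [norm_smul, norm_smul, show ‖‖b‖⁻¹ • b‖ = 1 from norm_smul_inv_norm (𝕜 := ℝ) hb, mul_one]
  have : |‖b‖ - ‖a‖| ≤ ‖a - b‖ := by rw [norm_sub_rev]; exact abs_norm_sub_norm_le b a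
  rw [norm_mul, Real.norm_eq_abs, Real.norm_eq_abs, abs_of_pos (inv_pos.2 ha')]
  have : ‖a‖⁻¹ * |‖b‖ - ‖a‖| ≤ ‖a‖⁻¹ * ‖a - b‖ := by gcongr
  rw [mul_div_assoc, div_eq_inv_mul]
  linarith

lemma norm_lineReflection_sub_le {n : ℕ} {a b w : En n} (ha : a ≠ 0) (hb : b ≠ 0)
    (hw : ‖w‖ = 1) :
    ‖lineReflection b w - lineReflection a w‖ ≤ 8 * ‖a - b‖ / ‖a‖ := by
  have h1 : ∀ c : En n, lineReflection c w =
      (2 * inner ℝ (‖c‖⁻¹ • c) w) • (‖c‖⁻¹ • c) - w := by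
    intro c
    rw [lineReflection, real_inner_smul_left, smul_smul]
    congr 2
    ring
  have h2 := norm_normalize_sub_le ha hb
  have ha1 : ‖‖a‖⁻¹ • a‖ = 1 := norm_smul_inv_norm (𝕜 := ℝ) ha
  have hb1 : ‖‖b‖⁻¹ • b‖ = 1 := norm_smul_inv_norm (𝕜 := ℝ) hb
  rw [h1, h1]
  set u := ‖a‖⁻¹ • a
  set v := ‖b‖⁻¹ • b
  have h3 : (2 * inner ℝ v w) • v - w - ((2 * inner ℝ u w) • u - w) =
      -((2 * inner ℝ v w) • (u - v) + (2 * inner ℝ (u - v) w) • u) := by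
    rw [inner_sub_left]
    module
  rw [h3, norm_neg]
  refine (norm_add_le _ _).trans ?_
  rw [norm_smul, norm_smul, norm_mul, norm_mul, ha1]
  have i1 := norm_inner_le_norm (𝕜 := ℝ) v w
  have i2 := norm_inner_le_norm (𝕜 := ℝ) (u - v) w
  rw [hb1, hw] at i1
  rw [hw] at i2
  have : ‖(2 : ℝ)‖ = 2 := by norm_num
  rw [this]
  have := norm_nonneg (u - v)
  calc _ ≤ 2 * (1 * 1) * ‖u - v‖ + 2 * (‖u - v‖ * 1) * 1 := by gcongr
    _ = 4 * ‖u - v‖ := by ring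
    _ ≤ 4 * (2 * ‖a - b‖ / ‖a‖) := by gcongr
    _ = _ := by ring

lemma rotNorm_reflection_trans_le {n : ℕ} (hn : 2 ≤ n) {a b : En n} (ha : a ≠ 0) (hb : b ≠ 0) :
    rotNorm ((ℝ ∙ b).reflection.trans (ℝ ∙ a).reflection) ≤ 8 * ‖a - b‖ / ‖a‖ := by
  have : Nonempty (Fin n) := ⟨⟨0, by lia⟩⟩
  have : Nonempty (sphere (0 : En n) 1) := (NormedSpace.sphere_nonempty.2 zero_le_one).to_subtype
  refine ciSup_le fun w => ?_
  have hw : ‖(w : En n)‖ = 1 := by simp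
  have h1 : ((ℝ ∙ b).reflection.trans (ℝ ∙ a).reflection) (w : En n) - w =
      (ℝ ∙ a).reflection (lineReflection b w - lineReflection a w) := by
    rw [map_sub, ← reflection_eq_lineReflection, ← reflection_eq_lineReflection,
      Submodule.reflection_reflection]
    rfl
  rw [h1, LinearIsometryEquiv.norm_map]
  exact norm_lineReflection_sub_le ha hb hw

/-- The line through `bisector e p` bisects the angle between the unit vector `e` and `p`. -/
def bisector {n : ℕ} (e p : En n) : En n := p + ‖p‖ • e

/-- The inverse of `bisector e` on the half space `0 < ⟪b, e⟫`. -/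
def unbisector {n : ℕ} (e b : En n) : En n := b - (‖b‖ ^ 2 / (2 * inner ℝ b e)) • e

lemma unbisector_bisector {n : ℕ} {e p : En n} (he : ‖e‖ = 1)
    (hp : 0 < inner ℝ p e) : unbisector e (bisector e p) = p := by
  have h1 : inner ℝ (bisector e p) e = inner ℝ p e + ‖p‖ := by
    simp [bisector, inner_add_left, real_inner_smul_left, he]
  have h2 : ‖bisector e p‖ ^ 2 = 2 * ‖p‖ * (inner ℝ p e + ‖p‖) := by
    rw [bisector, norm_add_sq_real, real_inner_smul_right, norm_smul, he, norm_norm]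
    ring
  have h3 : inner ℝ p e + ‖p‖ ≠ 0 := by positivity
  rw [unbisector, h1, h2, show 2 * ‖p‖ * (inner ℝ p e + ‖p‖) / (2 * (inner ℝ p e + ‖p‖)) = ‖p‖ by
    field_simp, bisector, add_sub_cancel_right]

lemma bisector_unbisector {n : ℕ} {e b : En n} (he : ‖e‖ = 1)
    (hb : 0 < inner ℝ b e) : bisector e (unbisector e b) = b := by
  set t := ‖b‖ ^ 2 / (2 * inner ℝ b e) with ht
  have ht0 : 0 ≤ t := by positivity
  have h1 : ‖unbisector e b‖ ^ 2 = t ^ 2 := by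
    rw [unbisector, ← ht, norm_sub_sq_real, real_inner_smul_right, norm_smul, he,
      Real.norm_of_nonneg ht0]
    have : ‖b‖ ^ 2 = 2 * (t * inner ℝ b e) := by rw [ht]; field_simp
    rw [this]; ring
  have h2 : ‖unbisector e b‖ = t := by
    rwa [sq_eq_sq₀ (norm_nonneg _) ht0] at h1
  rw [bisector, h2, unbisector, ← ht, sub_add_cancel]

lemma lineReflection_eq_smul_unbisector {n : ℕ} {e b : En n} (hb : 0 < inner ℝ b e) (c : ℝ) :
    lineReflection b (c • e) = (c * (2 * inner ℝ b e / ‖b‖ ^ 2)) • unbisector e b := by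
  have hb0 : b ≠ 0 := by rintro rfl; simp at hb
  have := norm_pos_iff.2 hb0
  rw [lineReflection, unbisector, real_inner_smul_right, smul_sub, smul_smul]
  have : c * (2 * inner ℝ b e / ‖b‖ ^ 2) * (‖b‖ ^ 2 / (2 * inner ℝ b e)) = c := by field_simp
  rw [this]
  congr 2
  ring

lemma norm_bisector_sub_le {n : ℕ} {e : En n} (he : ‖e‖ = 1) (p q : En n) :
    ‖bisector e p - bisector e q‖ ≤ 2 * ‖p - q‖ := by
  have : bisector e p - bisector e q = (p - q) + (‖p‖ - ‖q‖) • e := by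
    simp only [bisector]; module
  rw [this]
  refine (norm_add_le _ _).trans ?_
  rw [norm_smul, he, mul_one, Real.norm_eq_abs]
  linarith [abs_norm_sub_norm_le p q]

lemma lipschitzOnWith_unbisector {n : ℕ} {e : En n} (he : ‖e‖ = 1) :
    LipschitzOnWith 2000 (unbisector e) {b | 1 / 4 ≤ inner ℝ b e ∧ ‖b‖ ≤ 9} := by
  refine LipschitzOnWith.of_dist_le_mul ?_
  rintro a ⟨ha, ha'⟩ b ⟨hb, hb'⟩
  rw [dist_eq_norm, dist_eq_norm]
  have h0 : unbisector e a - unbisector e b = (a - b) -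
      (‖a‖ ^ 2 / (2 * inner ℝ a e) - ‖b‖ ^ 2 / (2 * inner ℝ b e)) • e := by
    simp only [unbisector]; module
  rw [h0]
  refine (norm_sub_le _ _).trans ?_
  rw [norm_smul, he, mul_one, Real.norm_eq_abs]
  have hd : inner ℝ a e - inner ℝ b e = inner ℝ (a - b) e := (inner_sub_left _ _ _).symm
  have i1 := abs_real_inner_le_norm (a - b) e
  rw [he, mul_one, ← hd] at i1
  have i2 := abs_real_inner_le_norm b e
  rw [he, mul_one] at i2
  have i3 := abs_norm_sub_norm_le a b
  set α := inner ℝ a e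
  set β := inner ℝ b e
  have hα : 0 < α := by linarith
  have hβ : 0 < β := by linarith
  have h1 : ‖a‖ ^ 2 / (2 * α) - ‖b‖ ^ 2 / (2 * β) =
      ((‖a‖ - ‖b‖) * (‖a‖ + ‖b‖) * β - ‖b‖ ^ 2 * (α - β)) / (2 * (α * β)) := by
    field_simp; ring
  have h2 : |‖a‖ ^ 2 / (2 * α) - ‖b‖ ^ 2 / (2 * β)| ≤ 1944 * ‖a - b‖ := by
    rw [h1, abs_div, abs_of_pos (show 0 < 2 * (α * β) by positivity), div_le_iff₀ (by positivity)]
    have hab : 1 / 16 ≤ α * β := by nlinarith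
    have hn := norm_nonneg (a - b)
    calc _ ≤ |(‖a‖ - ‖b‖) * (‖a‖ + ‖b‖) * β| + |‖b‖ ^ 2 * (α - β)| := abs_sub _ _
      _ = |‖a‖ - ‖b‖| * (‖a‖ + ‖b‖) * |β| + ‖b‖ ^ 2 * |α - β| := by
        rw [abs_mul, abs_mul, abs_mul, abs_of_nonneg (a := ‖a‖ + ‖b‖) (by positivity),
          abs_of_nonneg (a := ‖b‖ ^ 2) (by positivity)]
      _ ≤ ‖a - b‖ * (9 + 9) * 9 + 9 ^ 2 * ‖a - b‖ := by
        have : |β| ≤ 9 := i2.trans hb'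
        gcongr
      _ = 1944 * ‖a - b‖ * (2 * (1 / 16)) := by ring
      _ ≤ _ := by gcongr
  have hn := norm_nonneg (a - b)
  have : ((2000 : NNReal) : ℝ) = 2000 := rfl
  rw [this]
  linarith

/-- `F` is homogeneous of degree zero in both of its arguments. -/
def BiHomZero {n : ℕ} (F : En n → En n → ℝ≥0∞) : Prop :=
  ∀ s t : ℝ, 0 < s → 0 < t → ∀ x y : En n, x ≠ 0 → y ≠ 0 → F (s • x) (t • y) = F x y

lemma lintegral_lintegral_ball_le_of_lineReflection {n : ℕ} {K : NNReal}
    (hK : ∀ e : En n, ‖e‖ = 1 →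
      LipschitzOnWith K (unbisector e) {b | 1 / 4 ≤ inner ℝ b e ∧ ‖b‖ ≤ 9})
    {F : En n → En n → ℝ≥0∞} (hFm : Measurable (Function.uncurry F)) (hF : BiHomZero F) {w : En n} (hw : 3 / 8 ≤ ‖w‖)
    (hw' : ‖w‖ < 4) (ε : ℝ) :
    ∫⁻ p in ball w (1 / 4), ∫⁻ q in ball w (1 / 4), {q | ‖p - q‖ < ε}.indicator (F p) q ≤
      (K : ℝ≥0∞) ^ n * ((K : ℝ≥0∞) ^ n *
        ∫⁻ b in closedBall 0 9 \ ball 0 (1 / 4), ∫⁻ a in closedBall 0 9 \ ball 0 (1 / 4),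
          {a | ‖b - a‖ < 2 * ε}.indicator
            (fun a => F (lineReflection b w) (lineReflection a w)) a) := by
  have hw0 : 0 < ‖w‖ := by linarith
  set e : En n := ‖w‖⁻¹ • w with hedef
  have he : ‖e‖ = 1 := norm_smul_inv_norm (𝕜 := ℝ) (norm_pos_iff.1 hw0)
  have hwe : w = ‖w‖ • e := by rw [hedef, smul_smul, mul_inv_cancel₀ hw0.ne', one_smul]
  set V : Set (En n) := {b | 1 / 4 ≤ inner ℝ b e ∧ ‖b‖ ≤ 9} with hVdef
  have hVm : MeasurableSet V := by
    have h1 : MeasurableSet {b : En n | 1 / 4 ≤ inner ℝ b e} :=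
      measurableSet_le (by fun_prop) (by fun_prop)
    have h2 : MeasurableSet {b : En n | ‖b‖ ≤ 9} :=
      measurableSet_le (by fun_prop) (by fun_prop)
    exact h1.inter h2
  have hΦm : Measurable (unbisector e) := by unfold unbisector; fun_prop
  have hΨm : Measurable (bisector e) := by unfold bisector; fun_prop
  have hVsub : V ⊆ closedBall 0 9 \ ball 0 (1 / 4) := by
    rintro b ⟨h1, h2⟩
    refine ⟨by simpa using h2, ?_⟩
    have := real_inner_le_norm b e
    rw [he, mul_one] at this
    simp only [mem_ball_zero_iff, not_lt]
    linarith
  have hin : ∀ p ∈ ball w (1 / 4), 1 / 8 ≤ inner ℝ p e := by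
    intro p hp
    rw [mem_ball, dist_eq_norm] at hp
    have h1 : inner ℝ w e = ‖w‖ := by
      conv_lhs => rw [hwe]
      rw [real_inner_smul_left, real_inner_self_eq_norm_sq, he]; ring
    have h2 := abs_real_inner_le_norm (p - w) e
    rw [inner_sub_left, h1, he, mul_one] at h2
    have := (abs_le.1 h2).1
    linarith
  have hUV : ball w (1 / 4) ⊆ unbisector e '' V := by
    intro p hp
    have h1 := hin p hp
    refine ⟨bisector e p, ⟨?_, ?_⟩, unbisector_bisector he (by linarith)⟩
    · have h2 : inner ℝ (bisector e p) e = inner ℝ p e + ‖p‖ := by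
        simp [bisector, inner_add_left, real_inner_smul_left, he]
      have h3 := real_inner_le_norm p e
      rw [he, mul_one] at h3
      linarith
    · rw [mem_ball, dist_eq_norm] at hp
      have h4 : ‖p‖ ≤ ‖w‖ + ‖p - w‖ := by
        simpa using norm_add_le w (p - w)
      have : ‖bisector e p‖ ≤ ‖p‖ + ‖p‖ := by
        refine (norm_add_le _ _).trans ?_
        rw [norm_smul, he, norm_norm, mul_one]
      linarith
  have hlip := hK e he
  obtain ⟨H, hHm, hH⟩ : ∃ H : En n → En n → ℝ≥0∞, Measurable (Function.uncurry H) ∧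
      ∀ p q, H p q = if ‖bisector e p - bisector e q‖ < 2 * ε then F p q else 0 := by
    refine ⟨fun p q => if ‖bisector e p - bisector e q‖ < 2 * ε then F p q else 0, ?_,
      fun p q => rfl⟩
    exact Measurable.ite (measurableSet_lt (by fun_prop) (by fun_prop)) hFm measurable_const
  have hHm2 : Measurable fun x : En n × En n => H x.1 (unbisector e x.2) :=
    hHm.comp (f := fun x : En n × En n => (x.1, unbisector e x.2)) (by fun_prop)
  calc ∫⁻ p in ball w (1 / 4), ∫⁻ q in ball w (1 / 4), {q | ‖p - q‖ < ε}.indicator (F p) q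
      ≤ ∫⁻ p in ball w (1 / 4), ∫⁻ q in ball w (1 / 4), H p q := by
        refine lintegral_mono fun p => lintegral_mono fun q => ?_
        by_cases h : ‖p - q‖ < ε
        · have h' := (norm_bisector_sub_le he p q).trans_lt
            (show 2 * ‖p - q‖ < 2 * ε by linarith)
          simp [hH, h, h']
        · simp [h]
    _ ≤ ∫⁻ p in ball w (1 / 4), (K : ℝ≥0∞) ^ n *
          ∫⁻ a in V, H p (unbisector e a) := by
        refine lintegral_mono fun p => ?_
        exact setLIntegral_le_of_lipschitzOnWith hΦm hlip hUV
          hHm.of_uncurry_left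
    _ = (K : ℝ≥0∞) ^ n * ∫⁻ p in ball w (1 / 4),
          ∫⁻ a in V, H p (unbisector e a) := by
        rw [lintegral_const_mul']
        finiteness
    _ ≤ (K : ℝ≥0∞) ^ n * ((K : ℝ≥0∞) ^ n *
          ∫⁻ b in V, ∫⁻ a in V, H (unbisector e b) (unbisector e a)) := by
        gcongr
        refine setLIntegral_le_of_lipschitzOnWith (G := fun p => ∫⁻ a in V, H p (unbisector e a))
          hΦm hlip hUV hHm2.lintegral_prod_right'
    _ ≤ (K : ℝ≥0∞) ^ n * ((K : ℝ≥0∞) ^ n *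
          ∫⁻ b in V, ∫⁻ a in V, {a | ‖b - a‖ < 2 * ε}.indicator
            (fun a => F (lineReflection b w) (lineReflection a w)) a) := by
        gcongr 2
        refine setLIntegral_mono' hVm fun b hb => setLIntegral_mono' hVm fun a ha => ?_
        have hpos : ∀ c ∈ V, 0 < inner ℝ c e := fun c hc => by linarith [hc.1]
        have hL : ∀ c ∈ V, ∃ t : ℝ, 0 < t ∧ unbisector e c ≠ 0 ∧
            lineReflection c w = t • unbisector e c := by
          intro c hc
          have hc0 : c ≠ 0 := by rintro rfl; simpa using hpos _ hc
          have hci := hpos _ hc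
          have hcn := norm_pos_iff.2 hc0
          have heq := lineReflection_eq_smul_unbisector hci ‖w‖
          rw [← hwe] at heq
          refine ⟨_, by positivity, ?_, heq⟩
          intro h0
          rw [h0, smul_zero, ← reflection_eq_lineReflection] at heq
          have := congrArg norm heq
          rw [LinearIsometryEquiv.norm_map, norm_zero] at this
          linarith
        simp only [hH, indicator_apply, mem_ofPred_eq,
          bisector_unbisector he (hpos b hb), bisector_unbisector he (hpos a ha)]
        obtain ⟨s, hs, hs0, hs'⟩ := hL b hb
        obtain ⟨t, ht, ht0, ht'⟩ := hL a ha
        rw [hs', ht', hF s t hs ht _ _ hs0 ht0]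
    _ ≤ _ := by
        gcongr 2
        refine (lintegral_mono_set hVsub).trans (lintegral_mono fun b => ?_)
        exact lintegral_mono_set hVsub

/-- Averages of `F p q` over nearby pairs are controlled by integrals of `F w (ρ w)` over small
rotations `ρ`. Each `ρ` is a composition of two reflections in lines. -/
lemma exists_lintegral_lintegral_ball_le {n : ℕ} (hn : 2 ≤ n) :
    ∃ C : ℝ≥0∞, C ≠ ⊤ ∧ ∀ F : En n → En n → ℝ≥0∞, Measurable (Function.uncurry F) →
      BiHomZero F → ∀ ε : ℝ, 0 < ε → ε ≤ 1 / 8 → ∀ S : ℝ≥0∞,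
      (∀ ρ : En n ≃ₗᵢ[ℝ] En n, IsRotation ρ → rotNorm ρ ≤ 64 * ε →
        ∫⁻ w in ball 0 4, F w (ρ w) ≤ S) →
      ∫⁻ p in closedBall 0 3 \ ball 0 (1 / 2), ∫⁻ q in ball p ε, F p q ≤
        C * volume (ball (0 : En n) ε) * S := by
  have : Nonempty (Fin n) := ⟨⟨0, by lia⟩⟩
  obtain ⟨L, hL⟩ : ∃ L : NNReal, ∀ e : En n, ‖e‖ = 1 →
      LipschitzOnWith L (unbisector e) {b | 1 / 4 ≤ inner ℝ b e ∧ ‖b‖ ≤ 9} :=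
    ⟨2000, fun _ he => lipschitzOnWith_unbisector he⟩
  set K : ℝ≥0∞ := (L : ℝ≥0∞) ^ n with hK
  have hKt : K ≠ ⊤ := by finiteness
  set V : Set (En n) := closedBall 0 9 \ ball 0 (1 / 4) with hV
  have hVm : MeasurableSet V := measurableSet_closedBall.diff measurableSet_ball
  have hVt : volume V ≠ ⊤ :=
    ((measure_mono sdiff_subset).trans_lt measure_closedBall_lt_top).ne
  set v : ℝ≥0∞ := volume (ball (0 : En n) (1 / 8)) with hv
  have hv0 : v ≠ 0 := (measure_ball_pos _ _ (by norm_num)).ne'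
  have hvt : v ≠ ⊤ := measure_ball_lt_top.ne
  refine ⟨v⁻¹ * (K * K * volume V * 2 ^ n), by finiteness, fun F hFm hF ε hε hε' S hS => ?_⟩
  set P : Set (En n) := closedBall 0 3 \ ball 0 (1 / 2) with hP
  have hPm : MeasurableSet P := measurableSet_closedBall.diff measurableSet_ball
  set W : Set (En n) := ball 0 4 \ ball 0 (3 / 8) with hW
  have hWm : MeasurableSet W := measurableSet_ball.diff measurableSet_ball
  have hvol2 : volume (ball (0 : En n) (2 * ε)) = 2 ^ n * volume (ball (0 : En n) ε) := by
    rw [Measure.addHaar_ball_mul _ _ (by norm_num), finrank_euclideanSpace_fin,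
      ENNReal.ofReal_pow (by norm_num)]
    simp
  have hup : ∫⁻ w in W, ∫⁻ b in V, ∫⁻ a in V, {a | ‖b - a‖ < 2 * ε}.indicator
      (fun a => F (lineReflection b w) (lineReflection a w)) a ≤
      volume V * (2 ^ n * volume (ball (0 : En n) ε)) * S := by
    have hm3 : Measurable fun x : (En n × En n) × En n =>
        {a | ‖x.1.2 - a‖ < 2 * ε}.indicator
          (fun a => F (lineReflection x.1.2 x.1.1) (lineReflection a x.1.1)) x.2 := by
      have hA : MeasurableSet {x : (En n × En n) × En n | ‖x.1.2 - x.2‖ < 2 * ε} :=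
        measurableSet_lt (by fun_prop) (by fun_prop)
      have hB : Measurable fun x : (En n × En n) × En n =>
          F (lineReflection x.1.2 x.1.1) (lineReflection x.2 x.1.1) := by
        refine hFm.comp (Measurable.prodMk ?_ ?_)
        · exact measurable_lineReflection (measurable_snd.comp measurable_fst)
            (measurable_fst.comp measurable_fst)
        · exact measurable_lineReflection measurable_snd (measurable_fst.comp measurable_fst)
      exact hB.indicator hA
    rw [lintegral_lintegral_swap (hm3.lintegral_prod_right').aemeasurable]
    have hb : ∀ b ∈ V, ∫⁻ w in W, ∫⁻ a in V, {a | ‖b - a‖ < 2 * ε}.indicator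
        (fun a => F (lineReflection b w) (lineReflection a w)) a ≤
        2 ^ n * volume (ball (0 : En n) ε) * S := by
      intro b hb
      have hm2 : Measurable fun x : En n × En n => {a | ‖b - a‖ < 2 * ε}.indicator
          (fun a => F (lineReflection b x.1) (lineReflection a x.1)) x.2 :=
        hm3.comp (f := fun x : En n × En n => ((x.1, b), x.2)) (by fun_prop)
      rw [lintegral_lintegral_swap hm2.aemeasurable]
      calc _ ≤ ∫⁻ a in V, (ball b (2 * ε)).indicator (fun _ => S) a := by
            refine setLIntegral_mono' hVm fun a ha => ?_
            by_cases hab : ‖b - a‖ < 2 * ε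
            · have hab' : a ∈ ball b (2 * ε) := by rwa [mem_ball, dist_comm, dist_eq_norm]
              rw [indicator_of_mem hab']
              simp only [indicator_apply, mem_ofPred_eq, hab, if_true]
              have hne : ∀ c ∈ V, 1 / 4 ≤ ‖c‖ ∧ c ≠ 0 := by
                rintro c ⟨_, hc⟩
                simp only [mem_ball_zero_iff, not_lt] at hc
                exact ⟨hc, norm_pos_iff.1 (by linarith)⟩
              obtain ⟨ha4, ha0⟩ := hne a ha
              obtain ⟨hb4, hb0⟩ := hne b hb
              have hmp : MeasurePreserving (ℝ ∙ b).reflection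
                  ((volume : Measure (En n)).restrict (ball 0 4))
                  ((volume : Measure (En n)).restrict (ball 0 4)) := by
                have h := ((ℝ ∙ b).reflection.measurePreserving).restrict_preimage
                  (measurableSet_ball (x := (0 : En n)) (ε := 4))
                have h2 : (ℝ ∙ b).reflection ⁻¹' ball (0 : En n) 4 = ball 0 4 := by
                  ext; simp
                rwa [h2] at h
              calc _ ≤ ∫⁻ w in ball 0 4, F (lineReflection b w) (lineReflection a w) :=
                    lintegral_mono_set sdiff_subset
                _ = ∫⁻ w in ball 0 4, F w (((ℝ ∙ b).reflection.trans (ℝ ∙ a).reflection) w) := by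
                    rw [← hmp.lintegral_comp_emb
                      (ℝ ∙ b).reflection.toHomeomorph.measurableEmbedding]
                    refine lintegral_congr fun w => ?_
                    rw [LinearIsometryEquiv.trans_apply, ← reflection_eq_lineReflection b,
                      ← reflection_eq_lineReflection a, Submodule.reflection_reflection]
                _ ≤ S := by
                    refine hS _ (isRotation_reflection_trans ha0 hb0)
                      ((rotNorm_reflection_trans_le hn ha0 hb0).trans ?_)
                    rw [div_le_iff₀ (by linarith), norm_sub_rev]
                    nlinarith
            · simp [hab]
        _ ≤ ∫⁻ a, (ball b (2 * ε)).indicator (fun _ => S) a :=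
            setLIntegral_le_lintegral _ _
        _ = _ := by
            rw [lintegral_indicator measurableSet_ball, setLIntegral_const,
              Measure.addHaar_ball_center, hvol2, mul_comm]
    calc _ ≤ ∫⁻ b in V, 2 ^ n * volume (ball (0 : En n) ε) * S := setLIntegral_mono' hVm hb
      _ = _ := by rw [setLIntegral_const]; ring
  have hlow : v * ∫⁻ p in P, ∫⁻ q in ball p ε, F p q ≤
      ∫⁻ w in W, ∫⁻ p in ball w (1 / 4), ∫⁻ q in ball w (1 / 4),
        {q | ‖p - q‖ < ε}.indicator (F p) q := by
    have hm : Measurable fun p => ∫⁻ q in ball p ε, F p q := by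
      have hA : MeasurableSet {x : En n × En n | x.2 ∈ ball x.1 ε} :=
        measurableSet_lt (measurable_snd.dist measurable_fst) measurable_const
      have := (hFm.indicator hA).lintegral_prod_right' (ν := (volume : Measure (En n)))
      convert this using 2 with p
      rw [← lintegral_indicator measurableSet_ball]
      rfl
    have h1 : ∀ p ∈ P, v * ∫⁻ q in ball p ε, F p q =
        ∫⁻ w in W, (ball p (1 / 8)).indicator (fun _ => ∫⁻ q in ball p ε, F p q) w := by
      intro p hp
      simp only [hP, mem_sdiff, mem_closedBall_zero_iff, mem_ball_zero_iff, not_lt] at hp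
      have hsub : ball p (1 / 8) ⊆ W := by
        intro w hw
        rw [mem_ball, dist_eq_norm] at hw
        have h1 := norm_sub_norm_le w p
        have h2 := norm_sub_norm_le p w
        rw [norm_sub_rev] at h2
        simp only [hW, mem_sdiff, mem_ball_zero_iff, not_lt]
        constructor <;> linarith
      rw [lintegral_indicator measurableSet_ball, Measure.restrict_restrict measurableSet_ball,
        inter_eq_left.2 hsub, setLIntegral_const, Measure.addHaar_ball_center, mul_comm]
    rw [← lintegral_const_mul' _ _ hvt, setLIntegral_congr_fun hPm h1]
    rw [lintegral_lintegral_swap]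
    · refine lintegral_mono fun w => ?_
      rw [← lintegral_indicator hPm, ← lintegral_indicator measurableSet_ball]
      refine lintegral_mono fun p => ?_
      by_cases hwp : w ∈ ball p (1 / 8)
      · have hd : dist w p < 1 / 8 := hwp
        have hpw : p ∈ ball w (1 / 4) := by rw [mem_ball, dist_comm]; linarith
        rw [indicator_of_mem hpw]
        refine (indicator_le_self _ _ _).trans ?_
        rw [indicator_of_mem hwp]
        rw [← lintegral_indicator measurableSet_ball, ← lintegral_indicator measurableSet_ball]
        refine lintegral_mono fun q => ?_
        by_cases hq : q ∈ ball p ε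
        · have hq' : dist q p < ε := hq
          have hqw : q ∈ ball w (1 / 4) := by
            rw [mem_ball]
            have := dist_triangle q p w
            rw [dist_comm p w] at this
            linarith
          have hq2 : ‖p - q‖ < ε := by rwa [← dist_eq_norm, dist_comm]
          rw [indicator_of_mem hq, indicator_of_mem hqw, indicator_of_mem (by exact hq2)]
        · rw [indicator_of_notMem hq]; exact zero_le
      · refine le_of_eq_of_le ?_ zero_le
        simp only [indicator_apply_eq_zero]
        intro _ h
        exact absurd h hwp
    · refine Measurable.aemeasurable ?_
      have hA : MeasurableSet {x : En n × En n | x.2 ∈ ball x.1 (1 / 8)} :=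
        measurableSet_lt (measurable_snd.dist measurable_fst) measurable_const
      exact (hm.comp measurable_fst).indicator hA
  have hmain : v * ∫⁻ p in P, ∫⁻ q in ball p ε, F p q ≤
      K * K * (volume V * (2 ^ n * volume (ball (0 : En n) ε)) * S) := by
    refine hlow.trans ?_
    calc _ ≤ ∫⁻ w in W, K * (K * ∫⁻ b in V, ∫⁻ a in V, {a | ‖b - a‖ < 2 * ε}.indicator
          (fun a => F (lineReflection b w) (lineReflection a w)) a) := by
          refine setLIntegral_mono' hWm fun w hw => ?_
          simp only [hW, mem_sdiff, mem_ball_zero_iff, not_lt] at hw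
          exact lintegral_lintegral_ball_le_of_lineReflection hL hFm hF hw.2 hw.1 ε
      _ ≤ _ := by
          rw [lintegral_const_mul' _ _ hKt, lintegral_const_mul' _ _ hKt, ← mul_assoc]
          gcongr
  calc _ = v⁻¹ * (v * ∫⁻ p in P, ∫⁻ q in ball p ε, F p q) := by
        rw [← mul_assoc, ENNReal.inv_mul_cancel hv0 hvt, one_mul]
    _ ≤ v⁻¹ * (K * K * (volume V * (2 ^ n * volume (ball (0 : En n) ε)) * S)) := by gcongr
    _ = _ := by ring

/-- Small translations are controlled by small rotations, through an intermediate point averaged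
over a ball. -/
lemma exists_lintegral_add_sub_le {n : ℕ} (hn : 2 ≤ n) :
    ∃ C : ℝ≥0∞, C ≠ ⊤ ∧ ∀ Ω : En n → ℝ, Measurable Ω → HomZero Ω →
      ∀ φ : ℝ≥0∞ → ℝ≥0∞, Monotone φ → ∀ u : En n, u ≠ 0 → ‖u‖ ≤ 1 / 16 → ∀ S : ℝ≥0∞,
      (∀ ρ : En n ≃ₗᵢ[ℝ] En n, IsRotation ρ → rotNorm ρ ≤ 128 * ‖u‖ →
        ∫⁻ w in ball 0 4, φ (2 * ‖Ω (ρ w) - Ω w‖ₑ) ≤ S) →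
      ∫⁻ w in closedBall 0 (9 / 4) \ ball 0 (3 / 4), φ ‖Ω (w + u) - Ω w‖ₑ ≤ C * S := by
  have : Nonempty (Fin n) := ⟨⟨0, by lia⟩⟩
  obtain ⟨C, hCt, hC⟩ := exists_lintegral_lintegral_ball_le hn
  refine ⟨2 * (C * 2 ^ n), by finiteness, fun Ω hΩ hh φ hφ u hu0 hu S hS => ?_⟩
  have hφm : Measurable φ := hφ.measurable
  set ε := ‖u‖ with hε
  have hε0 : 0 < ε := norm_pos_iff.2 hu0
  set F : En n → En n → ℝ≥0∞ := fun p q => φ (2 * ‖Ω q - Ω p‖ₑ) with hF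
  have hFm : Measurable (Function.uncurry F) := by
    simp only [hF, Function.uncurry_def]
    exact hφm.comp (((hΩ.comp measurable_snd).sub (hΩ.comp measurable_fst)).enorm.const_mul 2)
  have hFh : BiHomZero F := by
    intro a b ha hb x y hx hy
    simp only [hF, hh a ha x hx, hh b hb y hy]
  set A : Set (En n) := closedBall 0 (9 / 4) \ ball 0 (3 / 4) with hA
  have hAm : MeasurableSet A := measurableSet_closedBall.diff measurableSet_ball
  set P : Set (En n) := closedBall 0 3 \ ball 0 (1 / 2) with hP
  have hPm : MeasurableSet P := measurableSet_closedBall.diff measurableSet_ball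
  have hAP : ∀ w ∈ A, w ∈ P ∧ w + u ∈ P := by
    intro w hw
    simp only [hA, mem_sdiff, mem_closedBall_zero_iff, mem_ball_zero_iff, not_lt] at hw
    simp only [hP, mem_sdiff, mem_closedBall_zero_iff, mem_ball_zero_iff, not_lt]
    have h1 := norm_add_le w u
    have h2 := norm_sub_norm_le w (-u)
    rw [sub_neg_eq_add, norm_neg] at h2
    refine ⟨⟨?_, ?_⟩, ?_, ?_⟩ <;> linarith
  set v : ℝ≥0∞ := volume (ball (0 : En n) ε) with hv
  have hv0 : v ≠ 0 := (measure_ball_pos _ _ hε0).ne'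
  have hvt : v ≠ ⊤ := measure_ball_lt_top.ne
  have hvol2 : volume (ball (0 : En n) (2 * ε)) = 2 ^ n * v := by
    rw [Measure.addHaar_ball_mul _ _ (by norm_num), finrank_euclideanSpace_fin,
      ENNReal.ofReal_pow (by norm_num)]
    simp [hv]
  set G : En n → ℝ≥0∞ := fun p => ∫⁻ q in ball p (2 * ε), F p q with hG
  have hGm : Measurable G := by
    have hA : MeasurableSet {x : En n × En n | x.2 ∈ ball x.1 (2 * ε)} :=
      measurableSet_lt (measurable_snd.dist measurable_fst) measurable_const
    have := (hFm.indicator hA).lintegral_prod_right' (ν := (volume : Measure (En n)))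
    convert this using 2 with p
    rw [hG]
    beta_reduce
    rw [← lintegral_indicator measurableSet_ball]
    rfl
  have hGP : ∫⁻ p in P, G p ≤ C * (2 ^ n * v) * S := by
    rw [← hvol2]
    refine hC F hFm hFh (2 * ε) (by linarith) (by linarith) S fun ρ h1 h2 => ?_
    exact hS ρ h1 (by linarith)
  have hkey : ∀ w, v * φ ‖Ω (w + u) - Ω w‖ₑ ≤ G w + G (w + u) := by
    intro w
    have hmw : ∀ p, Measurable (F p) := fun p => hFm.comp measurable_prodMk_left
    calc v * φ ‖Ω (w + u) - Ω w‖ₑ = ∫⁻ q in ball w ε, φ ‖Ω (w + u) - Ω w‖ₑ := by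
          rw [setLIntegral_const, Measure.addHaar_ball_center, mul_comm]
      _ ≤ ∫⁻ q in ball w ε, (F w q + F (w + u) q) := by
          refine lintegral_mono fun q => ?_
          have h : ‖Ω (w + u) - Ω w‖ₑ ≤ ‖Ω q - Ω w‖ₑ + ‖Ω q - Ω (w + u)‖ₑ := by
            have := enorm_sub_le (a := Ω q - Ω w) (b := Ω q - Ω (w + u))
            rwa [sub_sub_sub_cancel_left] at this
          rcases le_total ‖Ω q - Ω w‖ₑ ‖Ω q - Ω (w + u)‖ₑ with h2 | h2
          · refine (hφ (h.trans ?_)).trans le_add_self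
            rw [two_mul]; gcongr
          · refine (hφ (h.trans ?_)).trans le_self_add
            rw [two_mul]; gcongr
      _ = (∫⁻ q in ball w ε, F w q) + ∫⁻ q in ball w ε, F (w + u) q := by
          rw [lintegral_add_left (hmw w)]
      _ ≤ _ := by
          refine add_le_add ?_ ?_
          · exact lintegral_mono_set (ball_subset_ball (by linarith))
          · refine lintegral_mono_set (ball_subset_ball' ?_)
            rw [dist_self_add_right]; linarith
  have htr : ∫⁻ w in A, G (w + u) ≤ ∫⁻ p in P, G p := by
    rw [← lintegral_indicator hAm, ← lintegral_indicator hPm,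
      ← lintegral_add_right_eq_self (P.indicator G) u]
    refine lintegral_mono fun w => ?_
    by_cases hw : w ∈ A
    · rw [indicator_of_mem hw, indicator_of_mem (hAP w hw).2]
    · rw [indicator_of_notMem hw]; exact zero_le
  have hmain : v * ∫⁻ w in A, φ ‖Ω (w + u) - Ω w‖ₑ ≤ v * (2 * (C * 2 ^ n) * S) := by
    rw [← lintegral_const_mul' _ _ hvt]
    calc _ ≤ ∫⁻ w in A, (G w + G (w + u)) := lintegral_mono hkey
      _ = (∫⁻ w in A, G w) + ∫⁻ w in A, G (w + u) := lintegral_add_left hGm _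
      _ ≤ (∫⁻ p in P, G p) + ∫⁻ p in P, G p :=
          add_le_add (lintegral_mono_set fun w hw => (hAP w hw).1) htr
      _ ≤ C * (2 ^ n * v) * S + C * (2 ^ n * v) * S := add_le_add hGP hGP
      _ = _ := by ring
  exact (ENNReal.mul_le_mul_iff_right hv0 hvt).1 hmain

lemma apply_enorm_sum_le {φ : ℝ≥0∞ → ℝ≥0∞} (hφ : Monotone φ) {m : ℕ} (hm : 0 < m)
    (a : ℕ → ℝ) :
    φ ‖∑ k ∈ Finset.range m, a k‖ₑ ≤ ∑ k ∈ Finset.range m, φ (m * ‖a k‖ₑ) := by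
  obtain ⟨k, hk, hmax⟩ := (Finset.range m).exists_max_image (fun k => ‖a k‖ₑ)
    ⟨0, Finset.mem_range.2 hm⟩
  calc φ ‖∑ k ∈ Finset.range m, a k‖ₑ ≤ φ (m * ‖a k‖ₑ) := by
        refine hφ ((enorm_sum_le _ _).trans ((Finset.sum_le_card_nsmul _ _ _ hmax).trans ?_))
        simp
    _ ≤ _ := Finset.single_le_sum (f := fun k => φ (m * ‖a k‖ₑ)) (fun _ _ => zero_le) hk

/-- A translation by `v` is split into equal steps so that only rotations of size at most
`‖v‖ / 4` are needed. -/
lemma exists_lintegral_annulus_add_sub_le {n : ℕ} (hn : 2 ≤ n) :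
    ∃ C : ℝ≥0∞, C ≠ ⊤ ∧ ∀ Ω : En n → ℝ, Measurable Ω → HomZero Ω →
      ∀ φ : ℝ≥0∞ → ℝ≥0∞, Monotone φ → ∀ v : En n, v ≠ 0 → ‖v‖ < 1 / 4 → ∀ S : ℝ≥0∞,
      (∀ ρ : En n ≃ₗᵢ[ℝ] En n, IsRotation ρ → rotNorm ρ ≤ ‖v‖ / 4 →
        ∫⁻ w in ball 0 4, φ (1024 * ‖Ω (ρ w) - Ω w‖ₑ) ≤ S) →
      ∫⁻ w in closedBall 0 2 \ ball 0 1, φ ‖Ω (w + v) - Ω w‖ₑ ≤ C * S := by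
  obtain ⟨C, hCt, hC⟩ := exists_lintegral_add_sub_le hn
  refine ⟨512 * C, by finiteness, fun Ω hΩ hh φ hφ v hv0 hv S hS => ?_⟩
  set u : En n := (512 : ℝ)⁻¹ • v with hu
  have hun : ‖u‖ = ‖v‖ / 512 := by
    rw [hu, norm_smul, norm_inv, Real.norm_ofNat]; ring
  set φ' : ℝ≥0∞ → ℝ≥0∞ := fun t => φ ((512 : ℕ) * t) with hφ'
  have hφ'm : Monotone φ' := fun a b hab => hφ (by gcongr)
  have hb : ∫⁻ w in closedBall 0 (9 / 4) \ ball 0 (3 / 4), φ' ‖Ω (w + u) - Ω w‖ₑ ≤ C * S := by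
    refine hC Ω hΩ hh φ' hφ'm u (by simpa [hu] using hv0) (by rw [hun]; linarith) S
      fun ρ h1 h2 => ?_
    convert hS ρ h1 (h2.trans (by rw [hun]; linarith)) using 3 with w
    rw [hφ']
    beta_reduce
    rw [← mul_assoc]
    norm_num
  set A : Set (En n) := closedBall 0 (9 / 4) \ ball 0 (3 / 4) with hA
  have hAm : MeasurableSet A := measurableSet_closedBall.diff measurableSet_ball
  have hBm : MeasurableSet (closedBall (0 : En n) 2 \ ball 0 1) :=
    measurableSet_closedBall.diff measurableSet_ball
  have htel : ∀ w, Ω (w + v) - Ω w =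
      ∑ k ∈ Finset.range 512, (Ω (w + (k : ℝ) • u + u) - Ω (w + (k : ℝ) • u)) := by
    intro w
    have := Finset.sum_range_sub (fun k : ℕ => Ω (w + (k : ℝ) • u)) 512
    have h512 : ((512 : ℕ) : ℝ) • u = v := by
      rw [hu, smul_smul]; norm_num
    simp only [h512, Nat.cast_zero, zero_smul, add_zero] at this
    rw [← this]
    refine Finset.sum_congr rfl fun k _ => ?_
    rw [add_assoc, Nat.cast_add, Nat.cast_one, add_smul, one_smul]
  have hm : ∀ k : ℕ, Measurable fun w =>
      φ' ‖Ω (w + (k : ℝ) • u + u) - Ω (w + (k : ℝ) • u)‖ₑ := by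
    intro k
    refine hφ'm.measurable.comp (Measurable.enorm ?_)
    exact (hΩ.comp (by fun_prop)).sub (hΩ.comp (by fun_prop))
  calc _ ≤ ∫⁻ w in closedBall 0 2 \ ball 0 1, ∑ k ∈ Finset.range 512,
        φ' ‖Ω (w + (k : ℝ) • u + u) - Ω (w + (k : ℝ) • u)‖ₑ := by
        refine lintegral_mono fun w => ?_
        beta_reduce
        rw [htel w]
        exact apply_enorm_sum_le hφ (by norm_num) _
    _ = ∑ k ∈ Finset.range 512, ∫⁻ w in closedBall 0 2 \ ball 0 1,
        φ' ‖Ω (w + (k : ℝ) • u + u) - Ω (w + (k : ℝ) • u)‖ₑ :=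
        lintegral_finsetSum _ fun k _ => hm k
    _ ≤ ∑ k ∈ Finset.range 512, C * S := by
        refine Finset.sum_le_sum fun k hk => le_trans ?_ hb
        rw [← lintegral_indicator hAm, ← lintegral_indicator hBm,
          ← lintegral_add_right_eq_self (A.indicator _) ((k : ℝ) • u)]
        refine lintegral_mono fun w => ?_
        by_cases hw : w ∈ closedBall (0 : En n) 2 \ ball 0 1
        · have hwA : w + (k : ℝ) • u ∈ A := by
            have hku : ‖(k : ℝ) • u‖ ≤ 1 / 4 := by
              have hk' : (k : ℝ) ≤ 512 := by exact_mod_cast (Finset.mem_range.1 hk).le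
              rw [norm_smul, hun, Real.norm_natCast]
              have := norm_nonneg v
              nlinarith
            simp only [mem_sdiff, mem_closedBall_zero_iff, mem_ball_zero_iff, not_lt] at hw
            simp only [hA, mem_sdiff, mem_closedBall_zero_iff, mem_ball_zero_iff, not_lt]
            have h1 := norm_add_le w ((k : ℝ) • u)
            have h2 := norm_sub_norm_le w (-((k : ℝ) • u))
            rw [sub_neg_eq_add, norm_neg] at h2
            constructor <;> linarith
          rw [indicator_of_mem hw, indicator_of_mem hwA]
        · rw [indicator_of_notMem hw]; exact zero_le
    _ = _ := by simp [mul_assoc]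

lemma exists_eLpNorm_annulus_add_sub_le {n : ℕ} (hn : 2 ≤ n) :
    ∃ C : ℝ≥0∞, C ≠ ⊤ ∧ ∀ Ω : En n → ℝ, Measurable Ω → HomZero Ω →
      ∀ s : ℝ≥0∞, 1 ≤ s → ∀ v : En n, v ≠ 0 → ‖v‖ < 1 / 4 → ∀ M : ℝ≥0∞,
      (∀ ρ : En n ≃ₗᵢ[ℝ] En n, IsRotation ρ → rotNorm ρ ≤ ‖v‖ / 4 →
        eLpNorm (fun w => Ω (ρ w) - Ω w) s (volume.restrict (ball 0 4)) ≤ M) →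
      eLpNorm (fun w => Ω (w + v) - Ω w) s (volume.restrict (closedBall 0 2 \ ball 0 1)) ≤
        C * M := by
  obtain ⟨C, hCt, hC⟩ := exists_lintegral_annulus_add_sub_le hn
  refine ⟨max 1 C * 1024, by finiteness, fun Ω hΩ hh s hs v hv0 hv M hM => ?_⟩
  rcases eq_or_ne s ⊤ with rfl | hst
  · set φ : ℝ≥0∞ → ℝ≥0∞ := (Ioi (1024 * M)).indicator 1 with hφ
    have hφmono : Monotone φ := by
      intro a b hab
      by_cases ha : a ∈ Ioi (1024 * M)
      · have hb : b ∈ Ioi (1024 * M) := lt_of_lt_of_le ha hab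
        simp [hφ, indicator_of_mem ha, indicator_of_mem hb]
      · rw [hφ, indicator_of_notMem ha]; exact zero_le
    have h0 := hC Ω hΩ hh φ hφmono v hv0 hv 0 (fun ρ h1 h2 => by
      have h := hM ρ h1 h2
      rw [eLpNorm_exponent_top] at h
      have hae := ae_le_eLpNormEssSup (f := fun w => Ω (ρ w) - Ω w)
        (μ := volume.restrict (ball (0 : En n) 4))
      rw [nonpos_iff_eq_zero, lintegral_eq_zero_iff']
      · filter_upwards [hae] with w hw
        simp only [hφ, Pi.zero_apply, indicator_apply_eq_zero, mem_Ioi]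
        intro hlt
        refine absurd hlt (not_lt.2 ?_)
        gcongr
        exact hw.trans h
      · refine (hφmono.measurable.comp ?_).aemeasurable
        exact (((hΩ.comp ρ.continuous.measurable).sub hΩ).enorm).const_mul _)
    rw [mul_zero, nonpos_iff_eq_zero, lintegral_eq_zero_iff'] at h0
    · rw [eLpNorm_exponent_top]
      refine eLpNormEssSup_le_of_ae_enorm_bound ?_
      filter_upwards [h0] with w hw
      simp only [hφ, Pi.zero_apply, indicator_apply_eq_zero, mem_Ioi, Pi.one_apply,
        one_ne_zero, imp_false, not_lt] at hw
      refine hw.trans ?_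
      rw [mul_assoc]
      exact le_mul_of_one_le_left zero_le (le_max_left _ _)
    · refine (hφmono.measurable.comp ?_).aemeasurable
      exact ((hΩ.comp (by fun_prop)).sub hΩ).enorm
  · have hs0 : s ≠ 0 := (zero_lt_one.trans_le hs).ne'
    have hs1 : 1 ≤ s.toReal := by
      rw [← ENNReal.toReal_one]; exact (ENNReal.toReal_le_toReal (by simp) hst).2 hs
    have hspos : 0 < s.toReal := by linarith
    have h0 := hC Ω hΩ hh (fun t => t ^ s.toReal)
      (fun a b hab => ENNReal.rpow_le_rpow hab hspos.le) v hv0 hv ((1024 * M) ^ s.toReal)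
      (fun ρ h1 h2 => by
        have h := hM ρ h1 h2
        rw [eLpNorm_eq_lintegral_rpow_enorm_toReal hs0 hst, one_div,
          ENNReal.rpow_inv_le_iff hspos] at h
        simp_rw [ENNReal.mul_rpow_of_nonneg _ _ hspos.le]
        rw [lintegral_const_mul' _ _ (by finiteness)]
        gcongr)
    rw [eLpNorm_eq_lintegral_rpow_enorm_toReal hs0 hst]
    calc _ ≤ (C * (1024 * M) ^ s.toReal) ^ (1 / s.toReal) := by gcongr
      _ = C ^ (1 / s.toReal) * (1024 * M) := by
          rw [ENNReal.mul_rpow_of_nonneg _ _ (by positivity), ← ENNReal.rpow_mul,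
            mul_one_div_cancel hspos.ne', ENNReal.rpow_one]
      _ ≤ max 1 C * (1024 * M) := by
          gcongr
          calc C ^ (1 / s.toReal) ≤ (max 1 C) ^ (1 / s.toReal) := by
                gcongr; exact le_max_right _ _
            _ ≤ (max 1 C) ^ (1 : ℝ) := by
                refine ENNReal.rpow_le_rpow_of_exponent_le (le_max_left _ _) ?_
                rw [div_le_one hspos]; exact hs1
            _ = _ := ENNReal.rpow_one _
      _ = _ := by ring

lemma HomZero.comp_linearIsometryEquiv {n : ℕ} {Ω : En n → ℝ} (hh : HomZero Ω)
    (ρ : En n ≃ₗᵢ[ℝ] En n) : HomZero fun w => Ω (ρ w) := by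
  intro t ht x hx
  simp only [map_smul]
  exact hh t ht _ (by simpa using hx)

lemma eLpNorm_sphere_comp {n : ℕ} (hn : 2 ≤ n) {Ω : En n → ℝ} (hΩ : Measurable Ω)
    (hh : HomZero Ω) (s : ℝ≥0∞) (ρ : En n ≃ₗᵢ[ℝ] En n) :
    eLpNorm (fun x : sphere (0 : En n) 1 => Ω (ρ x)) s (sphereMeasure n) = sphereLpNorm s Ω := by
  obtain ⟨c, hc0, hct, hc⟩ := exists_eLpNorm_ball_eq hn one_pos
  have h1 := hc s Ω hΩ hh
  have h2 := hc s (fun w => Ω (ρ w)) (hΩ.comp ρ.continuous.measurable)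
    (hh.comp_linearIsometryEquiv ρ)
  have hmp : MeasurePreserving ρ ((volume : Measure (En n)).restrict (ball 0 1))
      ((volume : Measure (En n)).restrict (ball 0 1)) := by
    have h := (ρ.measurePreserving).restrict_preimage
      (measurableSet_ball (x := (0 : En n)) (ε := 1))
    have h2 : ρ ⁻¹' ball (0 : En n) 1 = ball 0 1 := by
      ext; simp
    rwa [h2] at h
  have h3 := eLpNorm_comp_measurePreserving (p := s) hΩ.aestronglyMeasurable hmp
  have h4 : c ^ (1 / s).toReal ≠ 0 := by
    simp [ENNReal.rpow_eq_zero_iff, hc0, hct]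
  have h5 : c ^ (1 / s).toReal ≠ ⊤ := by finiteness
  rw [Function.comp_def] at h3
  rw [h2, h1] at h3
  exact (ENNReal.mul_right_inj h4 h5).1 h3

lemma eLpNorm_sphere_le_modCont {n : ℕ} (hn : 2 ≤ n) {Ω : En n → ℝ} (hΩ : Measurable Ω)
    (hh : HomZero Ω) {s : ℝ≥0∞} (hs : 1 ≤ s) (hf : sphereLpNorm s Ω ≠ ⊤) (δ : ℝ) :
    (⨆ ρ : {ρ : En n ≃ₗᵢ[ℝ] En n // IsRotation ρ ∧ rotNorm ρ < δ},
      eLpNorm (fun x : sphere (0 : En n) 1 => Ω (ρ.1 (x : En n)) - Ω (x : En n)) s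
        (sphereMeasure n)) = ENNReal.ofReal (modCont s Ω δ) := by
  rw [modCont, ENNReal.ofReal_toReal]
  refine ne_top_of_le_ne_top (b := sphereLpNorm s Ω + sphereLpNorm s Ω) (by finiteness)
    (iSup_le fun ρ => ?_)
  have h1 : Measurable (fun x : sphere (0 : En n) 1 => Ω x) := hΩ.comp measurable_subtype_coe
  have h2 : Measurable (fun x : sphere (0 : En n) 1 => Ω (ρ.1 x)) :=
    (hΩ.comp ρ.1.continuous.measurable).comp measurable_subtype_coe
  have := eLpNorm_sub_le (μ := sphereMeasure n) h2.aestronglyMeasurable h1.aestronglyMeasurable hs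
  rwa [eLpNorm_sphere_comp hn hΩ hh] at this

lemma modCont_nonneg {n : ℕ} (s : ℝ≥0∞) (Ω : En n → ℝ) (δ : ℝ) : 0 ≤ modCont s Ω δ :=
  ENNReal.toReal_nonneg

lemma modCont_mono {n : ℕ} (hn : 2 ≤ n) {Ω : En n → ℝ} (hΩ : Measurable Ω)
    (hh : HomZero Ω) {s : ℝ≥0∞} (hs : 1 ≤ s) (hf : sphereLpNorm s Ω ≠ ⊤) :
    Monotone (modCont s Ω) := by
  intro a b hab
  rw [← ENNReal.ofReal_le_ofReal_iff (modCont_nonneg _ _ _),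
    ← eLpNorm_sphere_le_modCont hn hΩ hh hs hf, ← eLpNorm_sphere_le_modCont hn hΩ hh hs hf]
  exact iSup_le fun ρ => le_iSup (fun ρ : {ρ : En n ≃ₗᵢ[ℝ] En n // IsRotation ρ ∧ rotNorm ρ < b} =>
    eLpNorm (fun x : sphere (0 : En n) 1 => Ω (ρ.1 (x : En n)) - Ω (x : En n)) s
        (sphereMeasure n)) ⟨ρ.1, ρ.2.1, ρ.2.2.trans_le hab⟩

lemma exists_eLpNorm_annulus_add_sub_le_modCont {n : ℕ} (hn : 2 ≤ n) {Ω : En n → ℝ}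
    (hΩ : Measurable Ω) (hh : HomZero Ω) {s : ℝ≥0∞} (hs : 1 ≤ s) (hf : sphereLpNorm s Ω ≠ ⊤) :
    ∃ C : ℝ, 0 ≤ C ∧ ∀ v : En n, ‖v‖ < 1 / 4 →
      eLpNorm (fun w => Ω (w + v) - Ω w) s (volume.restrict (closedBall 0 2 \ ball 0 1)) ≤
        ENNReal.ofReal (C * modCont s Ω (‖v‖ / 2)) := by
  obtain ⟨C, hCt, hC⟩ := exists_eLpNorm_annulus_add_sub_le hn
  obtain ⟨c, hc0, hct, hc⟩ := exists_eLpNorm_ball_eq hn (R := 4) (by norm_num)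
  set D := C * c ^ (1 / s).toReal with hD
  have hDt : D ≠ ⊤ := by finiteness
  refine ⟨D.toReal, ENNReal.toReal_nonneg, fun v hv => ?_⟩
  rcases eq_or_ne v 0 with rfl | hv0
  · simp
  rw [ENNReal.ofReal_mul ENNReal.toReal_nonneg, ENNReal.ofReal_toReal hDt, hD, mul_assoc]
  refine hC Ω hΩ hh s hs v hv0 hv _ fun ρ h1 h2 => ?_
  rw [hc s (fun w => Ω (ρ w) - Ω w) ((hΩ.comp ρ.continuous.measurable).sub hΩ) fun t ht x hx => by
    simp only [hh t ht x hx, hh.comp_linearIsometryEquiv ρ t ht x hx],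
    ← eLpNorm_sphere_le_modCont hn hΩ hh hs hf]
  gcongr
  refine le_iSup (fun ρ : {ρ : En n ≃ₗᵢ[ℝ] En n // IsRotation ρ ∧ rotNorm ρ < ‖v‖ / 2} =>
    eLpNorm (fun x : sphere (0 : En n) 1 => Ω (ρ.1 (x : En n)) - Ω (x : En n)) s
        (sphereMeasure n)) ⟨ρ, h1, h2.trans_lt ?_⟩
  have := norm_pos_iff.2 hv0
  linarith

lemma modCont_le_integral {n : ℕ} (hn : 2 ≤ n) {Ω : En n → ℝ} (hΩ : Measurable Ω)
    {s : ℝ≥0∞} (hs : 1 ≤ s) {β : ℝ} (hβ : 0 < β) (hD : DiniCond s β Ω) {a t : ℝ} (ha : 0 < a)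
    (hat : 2 * a ≤ t) (ht : t < 1) :
    modCont s Ω a ≤ 2 * (t ^ β * ∫ δ in a..2 * a, modCont s Ω δ / δ ^ (1 + β)) := by
  obtain ⟨hh, hf, hInt⟩ := hD
  have hmono := modCont_mono hn hΩ hh hs hf
  have h1 : modCont s Ω a / (2 * a) ^ (1 + β) * a ≤
      ∫ δ in a..2 * a, modCont s Ω δ / δ ^ (1 + β) := by
    have hII : IntervalIntegrable (fun δ => modCont s Ω δ / δ ^ (1 + β)) volume a (2 * a) := by
      rw [intervalIntegrable_iff_integrableOn_Icc_of_le (by linarith)]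
      exact hInt.mono_set fun δ hδ => ⟨ha.trans_le hδ.1, hδ.2.trans_lt (by linarith)⟩
    have := intervalIntegral.integral_mono_on (by linarith) (intervalIntegrable_const
      (c := modCont s Ω a / (2 * a) ^ (1 + β))) hII fun δ hδ => by
        have hδ0 : 0 < δ := ha.trans_le hδ.1
        have := hmono hδ.1
        have := modCont_nonneg s Ω δ
        gcongr
        exact hδ.2
    rw [intervalIntegral.integral_const, smul_eq_mul] at this
    linarith
  have h2 : (2 * a) ^ β ≤ t ^ β := by gcongr
  have h3 : 0 < (2 * a) ^ β := by positivity
  calc modCont s Ω a = 2 * ((2 * a) ^ β * (modCont s Ω a / (2 * a) ^ (1 + β) * a)) := by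
        rw [Real.rpow_add (by positivity), Real.rpow_one]
        field_simp
    _ ≤ _ := by
        have := modCont_nonneg s Ω a
        have := h3.le.trans h2
        gcongr

lemma abs_rpow_sub_rpow_le {p x y : ℝ} (hp : p ≤ 0) (hx : 3 / 4 ≤ x) (hy : 3 / 4 ≤ y) :
    |x ^ p - y ^ p| ≤ -p * (3 / 4) ^ (p - 1) * |x - y| := by
  have := (convex_Ici (3 / 4 : ℝ)).norm_image_sub_le_of_norm_hasDerivWithin_le
    (f := fun t => t ^ p) (f' := fun t => p * t ^ (p - 1)) (C := -p * (3 / 4) ^ (p - 1))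
    (fun t ht => (Real.hasDerivAt_rpow_const
      (Or.inl (by have : (3 / 4 : ℝ) ≤ t := ht; linarith))).hasDerivWithinAt)
    (fun t ht => by
      have ht' : (3 / 4 : ℝ) ≤ t := ht
      rw [norm_mul, Real.norm_of_nonpos hp, Real.norm_of_nonneg (by positivity)]
      have : t ^ (p - 1) ≤ (3 / 4) ^ (p - 1) :=
        Real.rpow_le_rpow_of_nonpos (by norm_num) ht' (by linarith)
      nlinarith) hy hx
  simpa using this

lemma exists_eLpNorm_kernel_add_sub_le {n : ℕ} (hn : 2 ≤ n) {α : ℝ} (hα : α < n)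
    {Ω : En n → ℝ} (hΩ : Measurable Ω) (hh : HomZero Ω) {s : ℝ≥0∞} (hs : 1 ≤ s)
    (hf : sphereLpNorm s Ω ≠ ⊤) :
    ∃ C : ℝ, 0 < C ∧ ∀ v : En n, ‖v‖ < 1 / 4 →
      eLpNorm (fun w => Ω (w + v) * ‖w + v‖ ^ (α - (n : ℝ)) - Ω w * ‖w‖ ^ (α - (n : ℝ))) s
        (volume.restrict (ball 0 2 \ ball 0 1)) ≤
        ENNReal.ofReal (C * (modCont s Ω (‖v‖ / 2) + ‖v‖)) := by
  obtain ⟨C, hC0, hC⟩ := exists_eLpNorm_annulus_add_sub_le_modCont hn hΩ hh hs hf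
  obtain ⟨c, hc0, hct, hc⟩ := exists_eLpNorm_ball_eq hn (R := 2) (by norm_num)
  set p := α - (n : ℝ) with hp
  have hp0 : p < 0 := by linarith
  set D : ℝ := (3 / 4) ^ p with hD
  have hD0 : 0 ≤ D := by positivity
  set L : ℝ := -p * (3 / 4) ^ (p - 1) with hL
  have hL0 : 0 ≤ L := mul_nonneg (by linarith) (by positivity)
  set N : ℝ≥0∞ := c ^ (1 / s).toReal * sphereLpNorm s Ω with hN
  have hNt : N ≠ ⊤ := by finiteness
  have hN0 : 0 ≤ N.toReal := ENNReal.toReal_nonneg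
  refine ⟨D * C + L * N.toReal + 1, by positivity, fun v hv => ?_⟩
  set μ := (volume : Measure (En n)).restrict (ball 0 2 \ ball 0 1) with hμ
  have hm1 : Measurable fun w => D * ‖Ω (w + v) - Ω w‖ :=
    (((hΩ.comp (by fun_prop)).sub hΩ).norm).const_mul D
  have hm2 : Measurable fun w => (L * ‖v‖) * ‖Ω w‖ := hΩ.norm.const_mul _
  have hle : ∀ᵐ w ∂μ, ‖Ω (w + v) * ‖w + v‖ ^ p - Ω w * ‖w‖ ^ p‖ ≤
      D * ‖Ω (w + v) - Ω w‖ + (L * ‖v‖) * ‖Ω w‖ := by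
    refine (ae_restrict_iff' (measurableSet_ball.diff measurableSet_ball)).2
      (ae_of_all _ fun w hw => ?_)
    simp only [mem_sdiff, mem_ball_zero_iff, not_lt] at hw
    have h2 := norm_sub_norm_le w (-v)
    rw [sub_neg_eq_add, norm_neg] at h2
    have h3 : 3 / 4 ≤ ‖w + v‖ := by linarith
    have e : Ω (w + v) * ‖w + v‖ ^ p - Ω w * ‖w‖ ^ p =
        ‖w + v‖ ^ p * (Ω (w + v) - Ω w) + (‖w + v‖ ^ p - ‖w‖ ^ p) * Ω w := by ring
    rw [e]
    refine (norm_add_le _ _).trans ?_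
    rw [norm_mul, norm_mul]
    refine add_le_add (mul_le_mul_of_nonneg_right ?_ (norm_nonneg _))
      (mul_le_mul_of_nonneg_right ?_ (norm_nonneg _))
    · rw [Real.norm_of_nonneg (by positivity)]
      exact Real.rpow_le_rpow_of_nonpos (by norm_num) h3 hp0.le
    · rw [Real.norm_eq_abs]
      refine (abs_rpow_sub_rpow_le hp0.le h3 (by linarith)).trans ?_
      refine mul_le_mul_of_nonneg_left ?_ hL0
      have := abs_norm_sub_norm_le (w + v) w
      rwa [add_sub_cancel_left] at this
  have hA : eLpNorm (fun w => Ω (w + v) - Ω w) s μ ≤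
      ENNReal.ofReal (C * modCont s Ω (‖v‖ / 2)) :=
    (eLpNorm_mono_measure _ (Measure.restrict_mono
      (sdiff_subset_sdiff_left ball_subset_closedBall) le_rfl)).trans (hC v hv)
  have hB : eLpNorm Ω s μ ≤ N :=
    (eLpNorm_mono_measure _ (Measure.restrict_mono sdiff_subset le_rfl)).trans
      (hc s Ω hΩ hh).le
  have hω := modCont_nonneg s Ω (‖v‖ / 2)
  calc _ ≤ eLpNorm ((fun w => D * ‖Ω (w + v) - Ω w‖) + fun w => (L * ‖v‖) * ‖Ω w‖) s μ :=
        eLpNorm_mono_ae_real hle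
    _ ≤ eLpNorm (fun w => D * ‖Ω (w + v) - Ω w‖) s μ + eLpNorm (fun w => (L * ‖v‖) * ‖Ω w‖) s μ :=
        eLpNorm_add_le hm1.aestronglyMeasurable hm2.aestronglyMeasurable hs
    _ = ENNReal.ofReal D * eLpNorm (fun w => Ω (w + v) - Ω w) s μ +
        ENNReal.ofReal (L * ‖v‖) * eLpNorm Ω s μ := by
        have := eLpNorm_const_smul D (fun w => ‖Ω (w + v) - Ω w‖) s μ
        have h' := eLpNorm_const_smul (L * ‖v‖) (fun w => ‖Ω w‖) s μ
        rw [eLpNorm_norm, Real.enorm_eq_ofReal (by positivity)] at this h'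
        rw [← this, ← h']
        rfl
    _ ≤ ENNReal.ofReal D * ENNReal.ofReal (C * modCont s Ω (‖v‖ / 2)) +
        ENNReal.ofReal (L * ‖v‖) * ENNReal.ofReal N.toReal := by
        rw [ENNReal.ofReal_toReal hNt]
        gcongr
    _ = ENNReal.ofReal (D * (C * modCont s Ω (‖v‖ / 2)) + L * ‖v‖ * N.toReal) := by
        rw [ENNReal.ofReal_add (by positivity) (by positivity), ENNReal.ofReal_mul hD0,
          ENNReal.ofReal_mul (by positivity : 0 ≤ L * ‖v‖)]
    _ ≤ _ := by
        refine ENNReal.ofReal_le_ofReal ?_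
        have h1 : 0 ≤ D * C := by positivity
        have h2 : 0 ≤ L * N.toReal := by positivity
        have h3 := norm_nonneg v
        nlinarith [mul_nonneg h1 h3, mul_nonneg h2 hω]

/-- Rescaling of the kernel difference on an annulus to the unit annulus. -/
lemma eLpNorm_kernel_sub_eq {n : ℕ} {α : ℝ} (hα : α < n) {Ω : En n → ℝ} (hΩ : Measurable Ω)
    (hh : HomZero Ω) (s : ℝ≥0∞) {R : ℝ} (hR : 0 < R) (x₀ x : En n) :
    eLpNorm (fun z => Ω (x - z) * ‖x - z‖ ^ (α - (n : ℝ)) -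
        Ω (x₀ - z) * ‖x₀ - z‖ ^ (α - (n : ℝ))) s
      (volume.restrict (ball x₀ (2 * R) \ ball x₀ R)) =
    ENNReal.ofReal (R ^ ((n : ℝ) * (s⁻¹).toReal - ((n : ℝ) - α))) *
      eLpNorm (fun w => Ω (w + R⁻¹ • (x - x₀)) * ‖w + R⁻¹ • (x - x₀)‖ ^ (α - (n : ℝ)) -
        Ω w * ‖w‖ ^ (α - (n : ℝ))) s (volume.restrict (ball 0 2 \ ball 0 1)) := by
  set p := α - (n : ℝ) with hp
  have hp0 : p ≠ 0 := by rw [hp]; linarith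
  set v := R⁻¹ • (x - x₀) with hv
  set k : En n → ℝ := fun w => Ω (w + v) * ‖w + v‖ ^ p - Ω w * ‖w‖ ^ p with hk
  have hkm : Measurable k :=
    ((hΩ.comp (by fun_prop)).mul (by fun_prop)).sub (hΩ.mul (by fun_prop))
  have hK : ∀ w : En n, Ω w * ‖w‖ ^ p = R ^ p * (Ω (R⁻¹ • w) * ‖R⁻¹ • w‖ ^ p) := by
    intro w
    rcases eq_or_ne w 0 with rfl | hw
    · simp [Real.zero_rpow hp0]
    · rw [hh _ (inv_pos.2 hR) w hw, norm_smul, Real.norm_of_nonneg (by positivity),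
        Real.mul_rpow (by positivity) (by positivity), Real.inv_rpow hR.le]
      field_simp
  set τ : En n → En n := fun z => R⁻¹ • (x₀ - z) with hτ
  have hτm : Measurable τ := by fun_prop
  have hfun : (fun z => Ω (x - z) * ‖x - z‖ ^ p - Ω (x₀ - z) * ‖x₀ - z‖ ^ p) =
      R ^ p • (k ∘ τ) := by
    ext z
    simp only [Pi.smul_apply, Function.comp_apply, smul_eq_mul, hk, hτ, hv]
    rw [hK (x - z), hK (x₀ - z), ← smul_add, add_comm (x₀ - z), sub_add_sub_cancel]
    ring
  have hset : ball x₀ (2 * R) \ ball x₀ R = τ ⁻¹' (ball 0 2 \ ball 0 1) := by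
    ext z
    simp only [hτ, mem_sdiff, mem_ball, mem_preimage, dist_zero_right, norm_smul,
      norm_inv, Real.norm_of_nonneg hR.le, dist_comm z x₀, dist_eq_norm x₀ z]
    rw [inv_mul_lt_iff₀ hR, inv_mul_lt_iff₀ hR, mul_comm R 2, mul_one]
  have hmap : Measure.map τ (volume : Measure (En n)) = ENNReal.ofReal (R ^ n) • volume := by
    have h1 := Measure.map_addHaar_smul (volume : Measure (En n)) (inv_ne_zero hR.ne')
    have h2 := (Measure.measurePreserving_sub_left (volume : Measure (En n)) x₀).map_eq
    rw [show τ = (fun y => R⁻¹ • y) ∘ fun z => x₀ - z from rfl,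
      ← Measure.map_map (by fun_prop) (by fun_prop), h2, h1, finrank_euclideanSpace_fin,
      inv_pow, inv_inv, abs_of_pos (by positivity)]
  have hmr : Measure.map τ (volume.restrict (τ ⁻¹' (ball 0 2 \ ball 0 1))) =
      ENNReal.ofReal (R ^ n) • (volume : Measure (En n)).restrict (ball 0 2 \ ball 0 1) := by
    rw [← Measure.restrict_map hτm (measurableSet_ball.diff measurableSet_ball), hmap,
      Measure.restrict_smul]
  rw [hfun, hset, eLpNorm_const_smul, ← eLpNorm_map_measure hkm.aestronglyMeasurable
    hτm.aemeasurable, hmr, eLpNorm_smul_measure_of_ne_zero (by simp; positivity), smul_eq_mul,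
    ← mul_assoc, Real.enorm_eq_ofReal (by positivity),
    ENNReal.ofReal_rpow_of_pos (by positivity), ← ENNReal.ofReal_mul (by positivity)]
  congr 2
  rw [← Real.rpow_natCast, ← Real.rpow_mul hR.le, ← Real.rpow_add hR]
  congr 1
  rw [one_div, hp]; ring

/-- (Kernel smoothness estimate on dyadic annuli, two-point version.) -/
theorem kernel_difference_dyadic_two_points {n : ℕ} (hn : 2 ≤ n)
    (α : ℝ) (hα0 : 0 < α) (hαn : α < n)
    (s : ℝ≥0∞) (hs1 : 1 < s)
    (β : ℝ) (hβ0 : 0 < β) (hβ1 : β ≤ 1)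
    (Ω : En n → ℝ) (hΩm : Measurable Ω) (hD : DiniCond s β Ω) :
    ∃ C > 0, ∀ (x₀ : En n) (r : ℝ), 0 < r → ∀ j : ℕ, 2 ≤ j →
      ∀ x ∈ ball x₀ r, ∀ y ∈ ball x₀ r,
        (eLpNorm
            (fun z : En n =>
              Ω (x - z) * ‖x - z‖ ^ (α - (n : ℝ)) - Ω (y - z) * ‖y - z‖ ^ (α - (n : ℝ))) s
            (volume.restrict
              (ball x₀ ((2 : ℝ) ^ (j + 1) * r) \ ball x₀ ((2 : ℝ) ^ j * r)))).toReal
        ≤ C * ((2 : ℝ) ^ j * r) ^ ((n : ℝ) * (s⁻¹).toReal - ((n : ℝ) - α)) *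
            (1 / (2 : ℝ) ^ (j - 1) +
              (1 / (2 : ℝ) ^ ((j : ℝ) * β)) *
                (∫ δ in (‖x - x₀‖ / ((2 : ℝ) ^ (j + 1) * r))..(‖x - x₀‖ / ((2 : ℝ) ^ j * r)),
                  modCont s Ω δ / δ ^ (1 + β)) +
              (1 / (2 : ℝ) ^ ((j : ℝ) * β)) *
                (∫ δ in (‖y - x₀‖ / ((2 : ℝ) ^ (j + 1) * r))..(‖y - x₀‖ / ((2 : ℝ) ^ j * r)),
                  modCont s Ω δ / δ ^ (1 + β))) := by
  obtain ⟨hh, hf, -⟩ := id hD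
  obtain ⟨C, hC0, hC⟩ := exists_eLpNorm_kernel_add_sub_le hn hαn hΩm hh hs1.le hf
  refine ⟨2 * C, by positivity, fun x₀ r hr j hj x hx y hy => ?_⟩
  set R : ℝ := (2 : ℝ) ^ j * r with hR
  have hR0 : 0 < R := by positivity
  have hR2 : (2 : ℝ) ^ (j + 1) * r = 2 * R := by rw [hR]; ring
  set t : ℝ := 1 / (2 : ℝ) ^ j with ht
  have ht4 : t ≤ 1 / 4 := by
    rw [ht]
    refine one_div_le_one_div_of_le (by norm_num) ?_
    calc (4 : ℝ) = 2 ^ 2 := by norm_num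
      _ ≤ 2 ^ j := pow_le_pow_right₀ (by norm_num) hj
  have htj : 1 / (2 : ℝ) ^ (j - 1) = 2 * t := by
    obtain ⟨i, rfl⟩ : ∃ i, j = i + 1 := ⟨j - 1, by lia⟩
    rw [ht, Nat.add_sub_cancel, pow_succ]
    field_simp
  have htβ : 1 / (2 : ℝ) ^ ((j : ℝ) * β) = t ^ β := by
    rw [ht, Real.div_rpow zero_le_one (by positivity), Real.one_rpow, Real.rpow_mul (by norm_num),
      Real.rpow_natCast]
  set E : ℝ := R ^ ((n : ℝ) * (s⁻¹).toReal - ((n : ℝ) - α)) with hE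
  have hE0 : 0 ≤ E := by positivity
  rw [hR2, htj, htβ]
  set I : En n → ℝ := fun x => ∫ δ in (‖x - x₀‖ / (2 * R))..(‖x - x₀‖ / R),
    modCont s Ω δ / δ ^ (1 + β) with hI
  set μ := (volume : Measure (En n)).restrict (ball x₀ (2 * R) \ ball x₀ R) with hμ
  set K : En n → ℝ := fun w => Ω w * ‖w‖ ^ (α - (n : ℝ)) with hK
  have hKm : ∀ x, Measurable fun z => K (x - z) := fun x =>
    (hΩm.comp (by fun_prop)).mul (by fun_prop)
  have hI0 : ∀ x, 0 ≤ I x := fun x => by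
    refine intervalIntegral.integral_nonneg ?_ fun δ hδ => ?_
    · gcongr
      linarith
    · have : 0 ≤ δ := le_trans (by positivity) hδ.1
      have := modCont_nonneg s Ω δ
      positivity
  have key : ∀ x ∈ ball x₀ r, eLpNorm (fun z => K (x - z) - K (x₀ - z)) s μ ≤
      ENNReal.ofReal (E * (C * (t + 2 * (t ^ β * I x)))) := by
    intro x hx
    have hx' : ‖x - x₀‖ < r := by rwa [← dist_eq_norm]
    have hv : ‖R⁻¹ • (x - x₀)‖ = ‖x - x₀‖ / R := by
      rw [norm_smul, norm_inv, Real.norm_of_nonneg hR0.le, div_eq_inv_mul]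
    have hvt : ‖x - x₀‖ / R ≤ t := by
      rw [div_le_iff₀ hR0, ht, hR]
      field_simp
      exact hx'.le
    have hv4 : ‖x - x₀‖ / R < 1 / 4 := by
      refine lt_of_lt_of_le ?_ ht4
      rw [div_lt_iff₀ hR0, ht, hR]
      field_simp
      exact hx'
    rcases eq_or_ne x x₀ with rfl | hne
    · simp
    have ha : 0 < ‖x - x₀‖ / (2 * R) := by
      have := norm_pos_iff.2 (sub_ne_zero.2 hne)
      positivity
    have h2a : 2 * (‖x - x₀‖ / (2 * R)) = ‖x - x₀‖ / R := by field_simp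
    have hω := modCont_le_integral hn hΩm hs1.le hβ0 hD (t := t) ha (by rw [h2a]; exact hvt)
      (by linarith)
    rw [h2a] at hω
    rw [hK, hμ, eLpNorm_kernel_sub_eq hαn hΩm hh s hR0 x₀ x, ENNReal.ofReal_mul hE0]
    refine mul_le_mul_right ((hC _ (by rw [hv]; exact hv4)).trans
      (ENNReal.ofReal_le_ofReal ?_)) _
    rw [hv, div_div, mul_comm R 2]
    refine mul_le_mul_of_nonneg_left ?_ hC0.le
    linarith
  have hsub : eLpNorm (fun z => K (x - z) - K (y - z)) s μ ≤
      ENNReal.ofReal (E * (C * (t + 2 * (t ^ β * I x)))) +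
        ENNReal.ofReal (E * (C * (t + 2 * (t ^ β * I y)))) := by
    have := eLpNorm_sub_le (μ := μ) ((hKm x).sub (hKm x₀)).aestronglyMeasurable
      ((hKm y).sub (hKm x₀)).aestronglyMeasurable hs1.le
    rw [sub_sub_sub_cancel_right] at this
    exact this.trans (add_le_add (key x hx) (key y hy))
  have ht0 : 0 ≤ t := by positivity
  have htI : ∀ x, 0 ≤ t ^ β * I x := fun x => mul_nonneg (by positivity) (hI0 x)
  have hx0 := htI x
  have hy0 := htI y
  rw [← ENNReal.ofReal_add (by positivity) (by positivity)] at hsub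
  refine (ENNReal.toReal_le_of_le_ofReal (by positivity) hsub).trans ?_
  have : 0 ≤ E * C * t := by positivity
  nlinarith
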